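/- Let H and K be bialgebras over ℂ and let F ∈ (H⊗K)⊗(H⊗K) be a twist for the tensor product bialgebra H⊗K. Then the projection F_H = (id_H⊗ε_K⊗id_H⊗ε_K)(F) ∈ H⊗H is a twist for H, and the projection F_K = (ε_H⊗id_K⊗ε_H⊗id_K)(F) ∈ K⊗K is a twist for K. -/

import Mathlib

noncomputable section
namespace Kitaev

open TensorProduct LinearMap

/-- `F` is a twist (unitary 2-cocycle) for the bialgebra `B`: an invertible element of
`B ⊗ B` with `(ε ⊗ id)(F) = 1 = (id ⊗ ε)(F)` and
`F₁₂ · (Δ ⊗ id)(F) = F₂₃ · (id ⊗ Δ)(F)`. -/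
def IsTwist (B : Type) [Ring B] [Bialgebra ℂ B] (F : B ⊗[ℂ] B) : Prop :=
  IsUnit F ∧
  (TensorProduct.lid ℂ B).toLinearMap
      ((TensorProduct.map (Coalgebra.counit (R := ℂ)) LinearMap.id) F) = 1 ∧
  (TensorProduct.rid ℂ B).toLinearMap
      ((TensorProduct.map LinearMap.id (Coalgebra.counit (R := ℂ))) F) = 1 ∧
  (F ⊗ₜ (1 : B)) * ((TensorProduct.map (Coalgebra.comul (R := ℂ)) LinearMap.id) F) =
    ((TensorProduct.assoc ℂ B B B).symm ((1 : B) ⊗ₜ F)) *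
      ((TensorProduct.assoc ℂ B B B).symm
        ((TensorProduct.map LinearMap.id (Coalgebra.comul (R := ℂ))) F))

/-- The projection `id_H ⊗ ε_K : H ⊗ K →ₗ H`. -/
def projL (H K : Type) [Ring H] [Ring K] [Bialgebra ℂ H] [Bialgebra ℂ K] :
    H ⊗[ℂ] K →ₗ[ℂ] H :=
  (TensorProduct.rid ℂ H).toLinearMap ∘ₗ
    TensorProduct.map LinearMap.id (Coalgebra.counit (R := ℂ))

/-- The projection `ε_H ⊗ id_K : H ⊗ K →ₗ K`. -/
def projR (H K : Type) [Ring H] [Ring K] [Bialgebra ℂ H] [Bialgebra ℂ K] :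
    H ⊗[ℂ] K →ₗ[ℂ] K :=
  (TensorProduct.lid ℂ K).toLinearMap ∘ₗ
    TensorProduct.map (Coalgebra.counit (R := ℂ)) LinearMap.id

theorem IsTwist.map_bialgHom {B C : Type} [Ring B] [Ring C] [Bialgebra ℂ B] [Bialgebra ℂ C]
    (f : B →ₐc[ℂ] C) (F : B ⊗[ℂ] B) (hF : IsTwist B F) :
    IsTwist C (TensorProduct.map (f : B →ₗ[ℂ] C) (f : B →ₗ[ℂ] C) F) := by
  obtain ⟨h1, h2, h3, h4⟩ := hF
  have hcu : (Coalgebra.counit (R := ℂ)) ∘ₗ (f : B →ₗ[ℂ] C) = Coalgebra.counit :=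
    CoalgHomClass.counit_comp f
  have hcm : TensorProduct.map (f : B →ₗ[ℂ] C) (f : B →ₗ[ℂ] C) ∘ₗ Coalgebra.comul
      = Coalgebra.comul ∘ₗ (f : B →ₗ[ℂ] C) := CoalgHomClass.map_comp_comul f
  let g : B →ₐ[ℂ] C := f.toAlgHom
  let g2 : B ⊗[ℂ] B →ₐ[ℂ] C ⊗[ℂ] C := Algebra.TensorProduct.map g g
  let g3 : (B ⊗[ℂ] B) ⊗[ℂ] B →ₐ[ℂ] (C ⊗[ℂ] C) ⊗[ℂ] C := Algebra.TensorProduct.map g2 g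
  have e2 : ∀ x, TensorProduct.map (f : B →ₗ[ℂ] C) (f : B →ₗ[ℂ] C) x = g2 x := fun _ => rfl
  refine ⟨?_, ?_, ?_, ?_⟩
  · rw [e2]; exact h1.map g2
  · have := congrArg f h2
    rw [map_one] at this
    rw [← this]
    have key : (TensorProduct.lid ℂ C).toLinearMap ∘ₗ
        TensorProduct.map (Coalgebra.counit (R := ℂ)) LinearMap.id ∘ₗ
        TensorProduct.map (f : B →ₗ[ℂ] C) (f : B →ₗ[ℂ] C) =
        (f : B →ₗ[ℂ] C) ∘ₗ (TensorProduct.lid ℂ B).toLinearMap ∘ₗ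
        TensorProduct.map (Coalgebra.counit (R := ℂ)) LinearMap.id := by
      ext a b; simp
    exact LinearMap.congr_fun key F
  · have := congrArg f h3
    rw [map_one] at this
    rw [← this]
    have key : (TensorProduct.rid ℂ C).toLinearMap ∘ₗ
        TensorProduct.map LinearMap.id (Coalgebra.counit (R := ℂ)) ∘ₗ
        TensorProduct.map (f : B →ₗ[ℂ] C) (f : B →ₗ[ℂ] C) =
        (f : B →ₗ[ℂ] C) ∘ₗ (TensorProduct.rid ℂ B).toLinearMap ∘ₗ
        TensorProduct.map LinearMap.id (Coalgebra.counit (R := ℂ)) := by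
      ext a b; simp
    exact LinearMap.congr_fun key F
  · have := congrArg g3 h4
    rw [map_mul, map_mul] at this
    have ka : ∀ x, g3 ((TensorProduct.assoc ℂ B B B).symm x) =
        (TensorProduct.assoc ℂ C C C).symm (TensorProduct.map (f : B →ₗ[ℂ] C)
          (TensorProduct.map (f : B →ₗ[ℂ] C) (f : B →ₗ[ℂ] C)) x) := by
      intro x
      have key : g3.toLinearMap ∘ₗ (TensorProduct.assoc ℂ B B B).symm.toLinearMap =
        (TensorProduct.assoc ℂ C C C).symm.toLinearMap ∘ₗ (TensorProduct.map (f : B →ₗ[ℂ] C)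
          (TensorProduct.map (f : B →ₗ[ℂ] C) (f : B →ₗ[ℂ] C))) := by
        ext a b c; rfl
      exact LinearMap.congr_fun key x
    have k1 : g3 (TensorProduct.map (Coalgebra.comul (R := ℂ)) LinearMap.id F) =
        TensorProduct.map (Coalgebra.comul (R := ℂ)) LinearMap.id
          (TensorProduct.map (f : B →ₗ[ℂ] C) (f : B →ₗ[ℂ] C) F) := by
      change TensorProduct.map (TensorProduct.map (f : B →ₗ[ℂ] C) (f : B →ₗ[ℂ] C))
        (f : B →ₗ[ℂ] C) _ = _
      rw [← LinearMap.comp_apply, ← LinearMap.comp_apply, ← TensorProduct.map_comp,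
        ← TensorProduct.map_comp, hcm, LinearMap.id_comp, LinearMap.comp_id]
    have k2 : TensorProduct.map (f : B →ₗ[ℂ] C)
          (TensorProduct.map (f : B →ₗ[ℂ] C) (f : B →ₗ[ℂ] C))
          (TensorProduct.map LinearMap.id (Coalgebra.comul (R := ℂ)) F) =
        TensorProduct.map LinearMap.id (Coalgebra.comul (R := ℂ))
          (TensorProduct.map (f : B →ₗ[ℂ] C) (f : B →ₗ[ℂ] C) F) := by
      rw [← LinearMap.comp_apply, ← LinearMap.comp_apply, ← TensorProduct.map_comp,
        ← TensorProduct.map_comp, hcm, LinearMap.id_comp, LinearMap.comp_id]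
    rw [ka, ka, k1, k2, TensorProduct.map_tmul] at this
    have t1 : g3 (F ⊗ₜ (1 : B)) =
        (TensorProduct.map (f : B →ₗ[ℂ] C) (f : B →ₗ[ℂ] C) F) ⊗ₜ (1 : C) := by
      rw [← map_one g]; rfl
    have t2 : (f : B →ₗ[ℂ] C) (1 : B) = 1 := map_one g
    rw [t1, t2] at this
    exact this

/-- Let `H` and `K` be bialgebras over `ℂ` and let
`F ∈ (H ⊗ K) ⊗ (H ⊗ K)` be a twist for the tensor product bialgebra `H ⊗ K`. Then the
projection `F_H = (id_H ⊗ ε_K ⊗ id_H ⊗ ε_K)(F) ∈ H ⊗ H` is a twist for `H`, and the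
projection `F_K = (ε_H ⊗ id_K ⊗ ε_H ⊗ id_K)(F) ∈ K ⊗ K` is a twist for `K`. -/
theorem twist_projections (H K : Type) [Ring H] [Ring K] [Bialgebra ℂ H] [Bialgebra ℂ K]
    (F : (H ⊗[ℂ] K) ⊗[ℂ] (H ⊗[ℂ] K)) (hF : IsTwist (H ⊗[ℂ] K) F) :
    IsTwist H ((TensorProduct.map (projL H K) (projL H K)) F) ∧
    IsTwist K ((TensorProduct.map (projR H K) (projR H K)) F) := by
  let fL : H ⊗[ℂ] K →ₐc[ℂ] H := (Bialgebra.TensorProduct.rid ℂ ℂ H : H ⊗[ℂ] ℂ →ₐc[ℂ] H).comp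
    (Bialgebra.TensorProduct.map (BialgHom.id ℂ H) (Bialgebra.counitBialgHom ℂ K))
  let fR : H ⊗[ℂ] K →ₐc[ℂ] K := (Bialgebra.TensorProduct.lid ℂ K : ℂ ⊗[ℂ] K →ₐc[ℂ] K).comp
    (Bialgebra.TensorProduct.map (Bialgebra.counitBialgHom ℂ H) (BialgHom.id ℂ K))
  have hL : (fL : H ⊗[ℂ] K →ₗ[ℂ] H) = projL H K := by
    ext a b; rfl
  have hR : (fR : H ⊗[ℂ] K →ₗ[ℂ] K) = projR H K := by
    ext a b; rfl
  rw [← hL, ← hR]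
  exact ⟨hF.map_bialgHom fL F, hF.map_bialgHom fR F⟩

end Kitaev
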